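/- arXiv:2511.16637 — 5 statements merged into one kernel-verified Lean document; each statement's English description precedes it below -/
import Mathlib

section
/- Let x_1, …, x_n and y_1, …, y_n be bit sequences and let a_1, …, a_{n−1} and d_1, …, d_n be the bits defined by the lexicographic comparison circuit. Then d_n = 1 if and only if (x_1, …, x_n) ≤lex (y_1, …, y_n). -/
/-- The `a`-bits of the lexicographic comparison circuit (0-indexed):
`a_1 = [x_1 ≥ y_1]` and `a_{i+1} = a_i ∧ [x_{i+1} ≥ y_{i+1}]`, where for bits
`[x ≥ y]` is the Boolean `¬y ∨ x`. -/
def lexA (x y : ℕ → Bool) : ℕ → Bool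
  | 0 => !(y 0) || x 0
  | i + 1 => lexA x y i && (!(y (i + 1)) || x (i + 1))

/-- The `d`-bits of the lexicographic comparison circuit (0-indexed):
`d_1 = [y_1 ≥ x_1]` and `d_{i+1} = d_i ∧ (¬a_i ∨ [y_{i+1} ≥ x_{i+1}])`. -/
def lexD (x y : ℕ → Bool) : ℕ → Bool
  | 0 => !(x 0) || y 0
  | i + 1 => lexD x y i && (!(lexA x y i) || (!(x (i + 1)) || y (i + 1)))

/-- Lexicographic order on bit sequences of length `n` (0-indexed): either the
sequences are equal, or at the smallest index where they differ the first
sequence has `0` and the second has `1`. -/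
def lexLe (n : ℕ) (x y : ℕ → Bool) : Prop :=
  (∀ i < n, x i = y i) ∨
  ∃ i < n, (∀ j < i, x j = y j) ∧ x i = false ∧ y i = true

theorem lexLe_succ (m : ℕ) (x y : ℕ → Bool) :
    lexLe (m + 1) x y ↔
      (∃ i < m, (∀ j < i, x j = y j) ∧ x i = false ∧ y i = true) ∨
      ((∀ i < m, x i = y i) ∧ (!(x m) || y m) = true) := by
  unfold lexLe
  constructor
  · rintro (h | ⟨i, hi, h, hx, hy⟩)
    · right
      refine ⟨fun i hi => h i (by omega), ?_⟩
      rw [h m (by omega)]; cases y m <;> rfl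
    · rcases Nat.lt_succ_iff_lt_or_eq.mp hi with hi | rfl
      · exact Or.inl ⟨i, hi, h, hx, hy⟩
      · right; exact ⟨h, by simp [hx]⟩
  · rintro (⟨i, hi, h⟩ | ⟨h, hm⟩)
    · exact Or.inr ⟨i, by omega, h⟩
    · by_cases e : x m = y m
      · left
        intro i hi
        rcases Nat.lt_succ_iff_lt_or_eq.mp hi with hi | rfl
        · exact h i hi
        · exact e
      · right
        refine ⟨m, by omega, h, ?_⟩
        revert hm e
        cases x m <;> cases y m <;> simp

theorem lex_invariant (x y : ℕ → Bool) (m : ℕ) :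
    (lexD x y m = true ↔ lexLe (m + 1) x y) ∧
    (lexD x y m = true → (lexA x y m = true ↔ ∀ i < m + 1, x i = y i)) := by
  induction m with
  | zero =>
    rw [lexLe_succ]
    simp only [lexD, lexA]
    cases hx : x 0 <;> cases hy : y 0 <;> simp [hx, hy]
  | succ m ih =>
    obtain ⟨h1, h2⟩ := ih
    have h3 : (∀ i < m + 1 + 1, x i = y i) ↔ (∀ i < m + 1, x i = y i) ∧ x (m+1) = y (m+1) := by
      constructor
      · exact fun h => ⟨fun i hi => h i (by omega), h _ (by omega)⟩
      · rintro ⟨h, e⟩ i hi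
        rcases Nat.lt_succ_iff_lt_or_eq.mp hi with hi | rfl
        · exact h i hi
        · exact e
    have h4 : (∃ i < m + 1, (∀ j < i, x j = y j) ∧ x i = false ∧ y i = true) →
        ¬ ∀ i < m + 1, x i = y i := by
      rintro ⟨i, hi, -, hx, hy⟩ h
      have := h i hi
      simp [hx, hy] at this
    rw [lexLe_succ, h3]
    unfold lexLe at h1
    simp only [lexD, lexA]
    generalize (∃ i < m + 1, (∀ j < i, x j = y j) ∧ x i = false ∧ y i = true) = P at *
    generalize (∀ i < m + 1, x i = y i) = Q at *
    generalize lexD x y m = D at *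
    generalize lexA x y m = A at *
    generalize x (m+1) = u at *
    generalize y (m+1) = v at *
    cases D <;> cases A <;> cases u <;> cases v <;> simp at * <;> tauto

/-- The output bit `d_n` of the lexicographic comparison
circuit is `1` iff `(x_1, …, x_n) ≤lex (y_1, …, y_n)`. -/
theorem circuit_computes_lex (n : ℕ) (hn : 1 ≤ n) (x y : ℕ → Bool) :
    lexD x y (n - 1) = true ↔ lexLe n x y := by
  obtain ⟨m, rfl⟩ : ∃ m, n = m + 1 := ⟨n - 1, by omega⟩
  exact (lex_invariant x y m).1
end

section
/- Let x_1, …, x_n and y_1, …, y_n be bit sequences and let a_1, …, a_{n−1} and d_1, …, d_n be the bits defined by the lexicographic comparison circuit. Then for every i with 1 ≤ i ≤ n, d_i = 1 if and only if (x_1, …, x_i) ≤lex (y_1, …, y_i); and for every i with 1 ≤ i ≤ n−1, d_i = 1 and a_i = 1 hold simultaneously if and only if (x_1, …, x_i) = (y_1, …, y_i). -/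
/-- The strict part of the lexicographic order on prefixes of length `n`. -/
def lexStrict (n : ℕ) (x y : ℕ → Bool) : Prop :=
  ∃ i < n, (∀ j < i, x j = y j) ∧ x i = false ∧ y i = true

theorem prefixEq_succ (k : ℕ) (x y : ℕ → Bool) :
    (∀ j < k + 1, x j = y j) ↔ (∀ j < k, x j = y j) ∧ x k = y k :=
  Nat.forall_lt_succ_right

theorem lexStrict_succ (k : ℕ) (x y : ℕ → Bool) :
    lexStrict (k + 1) x y ↔
      lexStrict k x y ∨ ((∀ j < k, x j = y j) ∧ x k = false ∧ y k = true) :=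
  Nat.exists_lt_succ_right

theorem lexStrict_not_eq (k : ℕ) (x y : ℕ → Bool) (h : lexStrict k x y) :
    ¬ ∀ j < k, x j = y j := by
  obtain ⟨i, hi, -, h1, h2⟩ := h
  intro h
  have := h i hi
  simp_all

theorem circuit_invariant (x y : ℕ → Bool) (k : ℕ) :
    (lexD x y k = true ↔ ((∀ j < k + 1, x j = y j) ∨ lexStrict (k + 1) x y)) ∧
    ((lexD x y k = true ∧ lexA x y k = true) ↔ ∀ j < k + 1, x j = y j) := by
  induction k with
  | zero =>
    rw [lexStrict_succ, prefixEq_succ]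
    have h0 : ¬ lexStrict 0 x y := by rintro ⟨i, hi, -⟩; omega
    simp only [lexD, lexA, h0]
    cases x 0 <;> cases y 0 <;> simp
  | succ k ih =>
    have hne := lexStrict_not_eq (k + 1) x y
    rw [lexStrict_succ, prefixEq_succ (k + 1)]
    simp only [lexD, lexA]
    generalize (∀ j < k + 1, x j = y j) = E at *
    generalize lexStrict (k + 1) x y = S at *
    obtain ⟨h1, h2⟩ := ih
    cases x (k + 1) <;> cases y (k + 1) <;> cases hd : lexD x y k <;>
      cases ha : lexA x y k <;> simp [hd, ha] at h1 h2 ⊢ <;> tauto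

/-- For `1 ≤ i ≤ n`, the circuit bit `d_i` is `1` iff
`(x_1, …, x_i) ≤lex (y_1, …, y_i)`; and for `1 ≤ i ≤ n−1`, `d_i = 1` and
`a_i = 1` hold simultaneously iff `(x_1, …, x_i) = (y_1, …, y_i)`. -/
theorem circuit_prefix_invariants (n : ℕ) (x y : ℕ → Bool) :
    (∀ i, 1 ≤ i → i ≤ n → (lexD x y (i - 1) = true ↔ lexLe i x y)) ∧
    (∀ i, 1 ≤ i → i ≤ n - 1 →
      ((lexD x y (i - 1) = true ∧ lexA x y (i - 1) = true) ↔
        ∀ j < i, x j = y j)) := by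
  constructor
  · intro i hi _
    obtain ⟨k, rfl⟩ : ∃ k, i = k + 1 := ⟨i - 1, by omega⟩
    exact (circuit_invariant x y k).1
  · intro i hi _
    obtain ⟨k, rfl⟩ : ∃ k, i = k + 1 := ⟨i - 1, by omega⟩
    exact (circuit_invariant x y k).2
end

section
/- Let x_1, …, x_n, y_1, …, y_n, a_1, …, a_{n−1}, d_1, …, d_n be bits. Then the following pseudo-Boolean inequalities all hold — ā_1 + x_1 + ȳ_1 ≥ 1; 2a_1 + x̄_1 + y_1 ≥ 2; for 1 ≤ i ≤ n−2: 3ā_{i+1} + 2a_i + x_{i+1} + ȳ_{i+1} ≥ 3 and 2a_{i+1} + 2ā_i + x̄_{i+1} + y_{i+1} ≥ 2; d̄_1 + y_1 + x̄_1 ≥ 1; 2d_1 + ȳ_1 + x_1 ≥ 2; for 1 ≤ i ≤ n−1: 4d̄_{i+1} + 3d_i + ā_i + y_{i+1} + x̄_{i+1} ≥ 4 and 4d_{i+1} + 3d̄_i + a_i + ȳ_{i+1} + x_{i+1} ≥ 3 (where z̄ denotes 1 − z) — if and only if the bits a_i and d_i are exactly those produced by the lexicographic comparison circuit on inputs x_1,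 …, x_n and y_1, …, y_n. -/
/-- The listed pseudo-Boolean inequalities all hold iff the
bits `a_i` and `d_i` are exactly those produced by the lexicographic comparison
circuit on inputs `x` and `y` (0-indexed: `a_i, d_i` of the statement are
`a (i-1), d (i-1)` here). -/
theorem pb_encoding_characterizes_circuit (n : ℕ) (hn : 2 ≤ n)
    (x y a d : ℕ → Bool) :
    (((!(a 0)).toNat + (x 0).toNat + (!(y 0)).toNat ≥ 1) ∧
     (2 * (a 0).toNat + (!(x 0)).toNat + (y 0).toNat ≥ 2) ∧
     (∀ i, i < n - 2 →
       3 * (!(a (i + 1))).toNat + 2 * (a i).toNat + (x (i + 1)).toNat +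
         (!(y (i + 1))).toNat ≥ 3) ∧
     (∀ i, i < n - 2 →
       2 * (a (i + 1)).toNat + 2 * (!(a i)).toNat + (!(x (i + 1))).toNat +
         (y (i + 1)).toNat ≥ 2) ∧
     ((!(d 0)).toNat + (y 0).toNat + (!(x 0)).toNat ≥ 1) ∧
     (2 * (d 0).toNat + (!(y 0)).toNat + (x 0).toNat ≥ 2) ∧
     (∀ i, i < n - 1 →
       4 * (!(d (i + 1))).toNat + 3 * (d i).toNat + (!(a i)).toNat +
         (y (i + 1)).toNat + (!(x (i + 1))).toNat ≥ 4) ∧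
     (∀ i, i < n - 1 →
       4 * (d (i + 1)).toNat + 3 * (!(d i)).toNat + (a i).toNat +
         (!(y (i + 1))).toNat + (x (i + 1)).toNat ≥ 3)) ↔
    ((∀ i, i < n - 1 → a i = lexA x y i) ∧ (∀ i, i < n → d i = lexD x y i)) := by
  have key0 : ∀ p q r : Bool, ((!p).toNat + q.toNat + (!r).toNat ≥ 1 ∧
      2 * p.toNat + (!q).toNat + r.toNat ≥ 2) ↔ p = (!r || q) := by decide
  have keyA : ∀ p q u v : Bool,
      (3 * (!p).toNat + 2 * q.toNat + u.toNat + (!v).toNat ≥ 3 ∧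
       2 * p.toNat + 2 * (!q).toNat + (!u).toNat + v.toNat ≥ 2) ↔
      p = (q && (!v || u)) := by decide
  have keyD : ∀ p q r u v : Bool,
      (4 * (!p).toNat + 3 * q.toNat + (!r).toNat + v.toNat + (!u).toNat ≥ 4 ∧
       4 * p.toNat + 3 * (!q).toNat + r.toNat + (!v).toNat + u.toNat ≥ 3) ↔
      p = (q && (!r || (!u || v))) := by decide
  constructor
  · rintro ⟨h1, h2, h3, h4, h5, h6, h7, h8⟩
    have hA : ∀ i, i < n - 1 → a i = lexA x y i := by
      intro i
      induction i with
      | zero => intro _; exact (key0 _ _ _).1 ⟨h1, h2⟩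
      | succ i ih =>
        intro hi
        rw [(keyA _ _ _ _).1 ⟨h3 i (by omega), h4 i (by omega)⟩, ih (by omega), lexA]
    refine ⟨hA, ?_⟩
    intro i
    induction i with
    | zero => intro _; exact (key0 _ _ _).1 ⟨h5, h6⟩
    | succ i ih =>
      intro hi
      rw [(keyD _ _ _ _ _).1 ⟨h7 i (by omega), h8 i (by omega)⟩, ih (by omega),
        hA i (by omega), lexD]
  · rintro ⟨hA, hD⟩
    have a0 := (key0 _ _ _).2 (hA 0 (by omega))
    have d0 := (key0 _ _ _).2 (hD 0 (by omega))
    have as : ∀ i, i < n - 2 → _ := fun i hi => (keyA (a (i + 1)) (a i) (x (i + 1)) (y (i + 1))).2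
      (by rw [hA (i + 1) (by omega), hA i (by omega), lexA])
    have ds : ∀ i, i < n - 1 → _ := fun i hi =>
      (keyD (d (i + 1)) (d i) (a i) (x (i + 1)) (y (i + 1))).2
      (by rw [hD (i + 1) (by omega), hD i (by omega), hA i (by omega), lexD])
    exact ⟨a0.1, a0.2, fun i hi => (as i hi).1, fun i hi => (as i hi).2, d0.1, d0.2,
      fun i hi => (ds i hi).1, fun i hi => (ds i hi).2⟩
end

section
/- (Expanding a reification.) Let r be a bit, let ℓ_1, …, ℓ_m be bits, let a_1, …, a_m be nonnegative integers, and let A be an integer with 0 ≤ A ≤ ∑_i a_i + 1. Then the equivalence 'r = 1 if and only if ∑_i a_i ℓ_i ≥ A' holds if and only if both of the following pseudo-Boolean inequalities hold: A·(1−r) + ∑_i a_i ℓ_i ≥ A, and (∑_i a_i − A + 1)·r + ∑_i a_i (1−ℓ_i) ≥ ∑_i a_i − A + 1. -/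
/-- **expanding a reification.** For a bit `r`, bits `ℓ_i`,
nonnegative integer coefficients `a_i` and an integer `A` with
`0 ≤ A ≤ ∑ a_i + 1`, the equivalence `r = 1 ↔ ∑ a_i ℓ_i ≥ A` holds iff both
pseudo-Boolean inequalities `A(1−r) + ∑ a_i ℓ_i ≥ A` and
`(∑ a_i − A + 1) r + ∑ a_i (1−ℓ_i) ≥ ∑ a_i − A + 1` hold. -/
theorem reification_expansion (m : ℕ) (r : Bool) (ℓ : Fin m → Bool)
    (a : Fin m → ℕ) (A : ℤ) (hA0 : 0 ≤ A)
    (hA1 : A ≤ (∑ i, (a i : ℤ)) + 1) :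
    ((r = true) ↔ A ≤ ∑ i, (a i : ℤ) * (if ℓ i then 1 else 0)) ↔
    ((A ≤ A * (if r then 0 else 1) +
        ∑ i, (a i : ℤ) * (if ℓ i then 1 else 0)) ∧
     ((∑ i, (a i : ℤ)) - A + 1 ≤
        ((∑ i, (a i : ℤ)) - A + 1) * (if r then 1 else 0) +
          ∑ i, (a i : ℤ) * (if ℓ i then 0 else 1))) := by
  have h : (∑ i, (a i : ℤ)) = (∑ i, (a i : ℤ) * (if ℓ i then 1 else 0)) +
      ∑ i, (a i : ℤ) * (if ℓ i then 0 else 1) := by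
    rw [← Finset.sum_add_distrib]
    refine Finset.sum_congr rfl fun i _ => ?_
    cases ℓ i <;> simp
  have h0 : 0 ≤ ∑ i, (a i : ℤ) * (if ℓ i then 1 else 0) :=
    Finset.sum_nonneg fun i _ => by positivity
  have h1 : 0 ≤ ∑ i, (a i : ℤ) * (if ℓ i then 0 else 1) :=
    Finset.sum_nonneg fun i _ => by positivity
  generalize (∑ i, (a i : ℤ) * (if ℓ i then 1 else 0)) = S at *
  generalize (∑ i, (a i : ℤ) * (if ℓ i then 0 else 1)) = T at *
  generalize (∑ i, (a i : ℤ)) = U at *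
  cases r
  · simp only [Bool.false_eq_true, if_false, mul_one, mul_zero, false_iff]
    omega
  · simp only [if_true, mul_one, mul_zero, true_iff]
    omega
end

section
/- (Correctness of the clausal lex-leader encoding.) Let x_1, …, x_n, y_1, …, y_n, s_1, …, s_{n−1} be bits, and consider the clauses: s_1 ∨ ¬x_1; s_1 ∨ y_1; y_1 ∨ ¬x_1; for 1 ≤ i ≤ n−2: s_{i+1} ∨ ¬s_i ∨ ¬x_{i+1} and s_{i+1} ∨ ¬s_i ∨ y_{i+1}; and for 1 ≤ i ≤ n−1: ¬s_i ∨ y_{i+1} ∨ ¬x_{i+1}. Then: (i) if all of these clauses hold, then (x_1, …, x_n) ≤lex (y_1, …, y_n); and (ii) conversely, if (x_1, …, x_n) ≤lex (y_1, …, y_n), then setting s_i = 1 if and only if (x_1, …, x_i) = (y_1, …, y_i), for each 1 ≤ i ≤ n−1, makes all of these clauses hold. -/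
/-- The clauses of the clausal lex-leader encoding with auxiliary bits `s`
(0-indexed: `s i`, `x i`, `y i` here are `s_{i+1}`, `x_{i+1}`, `y_{i+1}` of the
statement). -/
def lexClauses (n : ℕ) (x y s : ℕ → Bool) : Prop :=
  (s 0 = true ∨ x 0 = false) ∧
  (s 0 = true ∨ y 0 = true) ∧
  (y 0 = true ∨ x 0 = false) ∧
  (∀ i, i < n - 2 → (s (i + 1) = true ∨ s i = false ∨ x (i + 1) = false)) ∧
  (∀ i, i < n - 2 → (s (i + 1) = true ∨ s i = false ∨ y (i + 1) = true)) ∧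
  (∀ i, i < n - 1 → (s i = false ∨ y (i + 1) = true ∨ x (i + 1) = false))

/-- **correctness of the clausal lex-leader encoding.**
(i) If all clauses hold then `x ≤lex y`; (ii) conversely, if `x ≤lex y`, then
setting `s_i = 1` iff the length-`i` prefixes of `x` and `y` are equal makes
all clauses hold. -/
theorem lex_clauses_correct (n : ℕ) (hn : 1 ≤ n) (x y : ℕ → Bool) :
    (∀ s : ℕ → Bool, lexClauses n x y s → lexLe n x y) ∧
    (lexLe n x y →
      lexClauses n x y (fun i => decide (∀ j < i + 1, x j = y j))) := by
  constructor
  · rintro s ⟨h1, h2, h3, h4, h5, h6⟩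
    by_cases hall : ∀ i < n, x i = y i
    · exact Or.inl hall
    · have hex : ∃ i, i < n ∧ x i ≠ y i := by
        push Not at hall
        exact hall
      obtain ⟨hk, hne⟩ := Nat.find_spec hex
      have hmin : ∀ j < Nat.find hex, x j = y j := by
        intro j hj
        have := Nat.find_min hex hj
        by_contra hc
        exact this ⟨by omega, hc⟩
      generalize Nat.find hex = k at hk hne hmin
      have hs : ∀ i, i < k → s i = true := by
        intro i
        induction i with
        | zero =>
          intro hi
          have := hmin 0 hi
          rcases h1 with h | h
          · exact h
          · rcases h2 with h' | h'
            · exact h'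
            · simp_all
        | succ i ih =>
          intro hi
          have e := hmin (i + 1) hi
          have si := ih (by omega)
          have a := h4 i (by omega)
          have b := h5 i (by omega)
          rw [si, e] at a
          rw [si] at b
          cases hy : y (i + 1) <;> simp_all
      have key : y k = true ∨ x k = false := by
        cases k with
        | zero => exact h3
        | succ k =>
          have a := h6 k (by omega)
          have si := hs k (by omega)
          simpa [si] using a
      refine Or.inr ⟨k, hk, hmin, ?_⟩
      cases hx : x k <;> cases hy : y k <;> simp_all
  · intro h
    have key : ∀ i < n, (∀ j < i, x j = y j) →
        x i = y i ∨ (x i = false ∧ y i = true) := by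
      intro i hi hj
      rcases h with h | ⟨k, hk, hp, hx, hy⟩
      · exact Or.inl (h i hi)
      · rcases lt_trichotomy i k with hl | rfl | hl
        · exact Or.inl (hp i hl)
        · exact Or.inr ⟨hx, hy⟩
        · have := hj k hl
          simp_all
    have ext : ∀ i, (∀ j < i, x j = y j) → x i = y i → ∀ j < i + 1, x j = y j := by
      intro i hp he j hj
      rcases Nat.lt_succ_iff_lt_or_eq.mp hj with hl | rfl
      · exact hp j hl
      · exact he
    have main : ∀ i < n, (∀ j < i, x j = y j) →
        (∀ j < i + 1, x j = y j) ∨ (x i = false ∧ y i = true) := by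
      intro i hi hp
      exact (key i hi hp).imp (ext i hp) id
    have le : ∀ i < n, (∀ j < i, x j = y j) → y i = true ∨ x i = false := by
      intro i hi hp
      rcases key i hi hp with e | e
      · rw [e]
        cases y i <;> simp
      · exact Or.inr e.1
    have m0 := main 0 (by omega) (by simp)
    refine ⟨?_, ?_, le 0 (by omega) (by simp), ?_, ?_, ?_⟩
    · simp only [decide_eq_true_eq]
      exact m0.imp id And.left
    · simp only [decide_eq_true_eq]
      exact m0.imp id And.right
    · intro i hi
      simp only [decide_eq_true_eq, decide_eq_false_iff_not]
      by_cases hp : ∀ j < i + 1, x j = y j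
      · exact (main (i + 1) (by omega) hp).imp id (fun e => Or.inr e.1)
      · exact Or.inr (Or.inl hp)
    · intro i hi
      simp only [decide_eq_true_eq, decide_eq_false_iff_not]
      by_cases hp : ∀ j < i + 1, x j = y j
      · exact (main (i + 1) (by omega) hp).imp id (fun e => Or.inr e.2)
      · exact Or.inr (Or.inl hp)
    · intro i hi
      simp only [decide_eq_false_iff_not]
      by_cases hp : ∀ j < i + 1, x j = y j
      · exact Or.inr (le (i + 1) (by omega) hp)
      · exact Or.inl hp
end
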